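/- arXiv:2012.13733 — 9 statements merged into one kernel-verified Lean document; each statement's English description precedes it below -/
import Mathlib

section
/- A bounded real sequence (x_n)_{n≥1} is Cesàro convergent to ℓ if and only if for every real number α > 1 one has lim_{k→∞} (1/(α^{k+1} − α^k)) · Σ_{α^k ≤ i < α^{k+1}} x_i = ℓ, where the sum ranges over positive integers i with α^k ≤ i < α^{k+1}. -/
open Filter

lemma aux_pow {α : ℝ} (h : 1 < α) : Tendsto (fun k : ℕ => α ^ k) atTop atTop :=
  tendsto_pow_atTop_atTop_of_one_lt h

lemma aux_ceil {α : ℝ} (h : 1 < α) :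
    Tendsto (fun k : ℕ => (⌈α ^ k⌉₊ : ℝ) / α ^ k) atTop (nhds 1) :=
  (tendsto_nat_ceil_div_atTop (R := ℝ)).comp (aux_pow h)

lemma aux_ceil_top {α : ℝ} (h : 1 < α) :
    Tendsto (fun k : ℕ => ⌈α ^ k⌉₊) atTop atTop :=
  tendsto_nat_ceil_atTop.comp (aux_pow h)

lemma aux_shift (x : ℕ → ℝ) (ℓ : ℝ) :
    Tendsto (fun n : ℕ => (1 / (n : ℝ)) * ∑ i ∈ Finset.Icc 1 n, x i) atTop (nhds ℓ) ↔
    Tendsto (fun n : ℕ => (∑ i ∈ Finset.Ico 1 n, x i) / (n : ℝ)) atTop (nhds ℓ) := by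
  have h1 : Tendsto (fun n : ℕ => (n : ℝ) / ((n : ℝ) + 1)) atTop (nhds 1) :=
    tendsto_natCast_div_add_atTop (1 : ℝ)
  rw [← tendsto_add_atTop_iff_nat (f := fun n : ℕ => (∑ i ∈ Finset.Ico 1 n, x i) / (n : ℝ)) 1]
  have hI : ∀ n : ℕ, Finset.Ico 1 (n + 1) = Finset.Icc 1 n := fun n => by
    ext; simp only [Finset.mem_Ico, Finset.mem_Icc]; omega
  simp only [hI]
  constructor
  · intro h
    have := h.mul h1
    rw [mul_one] at this
    refine this.congr' ?_
    filter_upwards [eventually_gt_atTop 0] with n hn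
    have : (n : ℝ) ≠ 0 := by positivity
    have : (n : ℝ) + 1 ≠ 0 := by positivity
    push_cast
    field_simp
  · intro h
    have := h.div h1 one_ne_zero
    rw [div_one] at this
    refine this.congr' ?_
    filter_upwards [eventually_gt_atTop 0] with n hn
    rw [Pi.div_apply]
    have : (n : ℝ) ≠ 0 := by positivity
    have : (n : ℝ) + 1 ≠ 0 := by positivity
    push_cast
    field_simp

lemma aux_le {α : ℝ} (h : 1 < α) (k : ℕ) : ⌈α ^ k⌉₊ ≤ ⌈α ^ (k + 1)⌉₊ :=
  Nat.ceil_mono (pow_le_pow_right₀ h.le (Nat.le_succ k))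

lemma aux_one_le {α : ℝ} (h : 1 < α) (k : ℕ) : 1 ≤ ⌈α ^ k⌉₊ :=
  Nat.one_le_ceil_iff.2 (by positivity)

lemma aux_block (x : ℕ → ℝ) {α : ℝ} (h : 1 < α) (k : ℕ) :
    ∑ i ∈ Finset.Ico ⌈α ^ k⌉₊ ⌈α ^ (k + 1)⌉₊, x i =
      ∑ i ∈ Finset.Ico 1 ⌈α ^ (k + 1)⌉₊, x i - ∑ i ∈ Finset.Ico 1 ⌈α ^ k⌉₊, x i := by
  rw [← Finset.sum_Ico_consecutive x (aux_one_le h k) (aux_le h k)]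
  ring

lemma aux_fwd (x : ℕ → ℝ) (ℓ : ℝ)
    (H : Tendsto (fun n : ℕ => (∑ i ∈ Finset.Ico 1 n, x i) / (n : ℝ)) atTop (nhds ℓ))
    {α : ℝ} (h : 1 < α) :
    Tendsto (fun k : ℕ =>
            (1 / (α ^ (k + 1) - α ^ k)) * ∑ i ∈ Finset.Ico ⌈α ^ k⌉₊ ⌈α ^ (k + 1)⌉₊, x i)
          atTop (nhds ℓ) := by
  have h0 : Tendsto (fun k : ℕ => (∑ i ∈ Finset.Ico 1 ⌈α ^ k⌉₊, x i) / α ^ k)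
      atTop (nhds ℓ) := by
    have := (H.comp (aux_ceil_top h)).mul (aux_ceil h)
    rw [mul_one] at this
    refine this.congr fun k => ?_
    have h1 : (⌈α ^ k⌉₊ : ℝ) ≠ 0 := by have := aux_one_le h k; positivity
    simp only [Function.comp]
    field_simp
  have h1 := h0.comp (tendsto_add_atTop_nat 1)
  have h2 := ((h1.const_mul α).sub h0).div_const (α - 1)
  have hα : α - 1 ≠ 0 := by linarith
  have e : (α * ℓ - ℓ) / (α - 1) = ℓ := by field_simp
  rw [e] at h2
  refine h2.congr fun k => ?_
  rw [aux_block x h]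
  have : α ^ k ≠ 0 := by positivity
  have e2 : α ^ (k + 1) - α ^ k = α ^ k * (α - 1) := by ring
  have : α ≠ 0 := by positivity
  simp only [Function.comp]
  rw [e2, pow_succ]
  field_simp

lemma aux_sub (x : ℕ → ℝ) (ℓ : ℝ) {α : ℝ} (h : 1 < α)
    (H : Tendsto (fun k : ℕ =>
            (1 / (α ^ (k + 1) - α ^ k)) * ∑ i ∈ Finset.Ico ⌈α ^ k⌉₊ ⌈α ^ (k + 1)⌉₊, x i)
          atTop (nhds ℓ)) :
    Tendsto (fun k : ℕ => (∑ i ∈ Finset.Ico 1 ⌈α ^ k⌉₊, x i) / (⌈α ^ k⌉₊ : ℝ))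
      atTop (nhds ℓ) := by
  have hg : ∀ k : ℕ, 0 < α ^ (k + 1) - α ^ k := fun k =>
    sub_pos.2 (pow_lt_pow_right₀ h (Nat.lt_succ_self k))
  have ho : (fun k : ℕ => ∑ i ∈ Finset.Ico ⌈α ^ k⌉₊ ⌈α ^ (k + 1)⌉₊, x i
      - ℓ * (α ^ (k + 1) - α ^ k)) =o[atTop] (fun k : ℕ => α ^ (k + 1) - α ^ k) := by
    rw [Asymptotics.isLittleO_iff_tendsto fun k hk => absurd hk (hg k).ne']
    have := H.sub_const ℓ
    rw [sub_self] at this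
    refine this.congr fun k => ?_
    have := (hg k).ne'
    field_simp
  have hs : ∀ n : ℕ, ∑ k ∈ Finset.range n, (α ^ (k + 1) - α ^ k) = α ^ n - 1 := fun n => by
    rw [Finset.sum_range_sub (fun k => α ^ k)]; simp
  have hT : Tendsto (fun n : ℕ => α ^ n - 1) atTop atTop :=
    tendsto_atTop_add_const_right _ _ (aux_pow h)
  have := ho.sum_range (fun k => (hg k).le) (by simpa only [hs] using hT)
  simp only [hs, Finset.sum_sub_distrib, ← Finset.mul_sum, aux_block x h] at this
  simp only [← Finset.sum_sub_distrib, hs] at this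
  simp only [Finset.sum_range_sub (fun k => ∑ i ∈ Finset.Ico 1 ⌈α ^ k⌉₊, x i)] at this
  have h3 := this.tendsto_div_nhds_zero
  simp only [pow_zero, Nat.ceil_one, Finset.Ico_self, Finset.sum_empty, sub_zero] at h3
  have h4 : Tendsto (fun n : ℕ => 1 - (α ^ n)⁻¹) atTop (nhds 1) := by
    simpa using (tendsto_const_nhds (x := (1 : ℝ))).sub (tendsto_inv_atTop_zero.comp (aux_pow h))
  have h5 := ((h3.add_const ℓ).mul h4).div (aux_ceil h) one_ne_zero
  simp only [zero_add, mul_one, div_one] at h5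
  refine h5.congr' ?_
  filter_upwards [hT.eventually_gt_atTop 0] with n hn
  have h1 : (⌈α ^ n⌉₊ : ℝ) ≠ 0 := by have := aux_one_le h n; positivity
  have h6 : α ^ n ≠ 0 := by positivity
  have h7 := hn.ne'
  rw [Pi.div_apply]
  field_simp
  ring

lemma aux_bwd (x : ℕ → ℝ) (ℓ : ℝ)
    (hbdd : ∃ C : ℝ, ∀ n : ℕ, 1 ≤ n → |x n| ≤ C)
    (H : ∀ α : ℝ, 1 < α →
      Tendsto (fun k : ℕ => (∑ i ∈ Finset.Ico 1 ⌈α ^ k⌉₊, x i) / (⌈α ^ k⌉₊ : ℝ))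
      atTop (nhds ℓ)) :
    Tendsto (fun n : ℕ => (∑ i ∈ Finset.Ico 1 n, x i) / (n : ℝ)) atTop (nhds ℓ) := by
  obtain ⟨C, hC⟩ := hbdd
  have hsum : ∀ n : ℕ, 1 ≤ n → ∑ i ∈ Finset.Ico 1 n, (x i + C) =
      ∑ i ∈ Finset.Ico 1 n, x i + (n - 1) * C := fun n hn => by
    rw [Finset.sum_add_distrib]; simp [Nat.cast_sub hn]
  have hlim : Tendsto (fun n : ℕ => C - C / (n : ℝ)) atTop (nhds C) := by
    simpa using (tendsto_const_nhds (x := C)).sub (tendsto_const_div_atTop_nhds_zero_nat C)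
  have key : Tendsto (fun n : ℕ => (∑ i ∈ Finset.Ico 1 n, (x i + C)) / (n : ℝ)) atTop
      (nhds (ℓ + C)) := by
    refine tendsto_div_of_monotone_of_exists_subseq_tendsto_div _ _ ?_ ?_
    · intro a b hab
      refine Finset.sum_le_sum_of_subset_of_nonneg (Finset.Ico_subset_Ico_right hab) ?_
      intro i hi _
      have := neg_le_of_abs_le (hC i (Finset.mem_Ico.1 hi).1)
      linarith
    · intro a ha
      obtain ⟨β, hβ, hβa⟩ := exists_between ha
      refine ⟨fun k => ⌈β ^ k⌉₊, ?_, aux_ceil_top hβ, ?_⟩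
      · have h1 := (((aux_ceil hβ).comp (tendsto_add_atTop_nat 1)).mul_const β).div
          (aux_ceil hβ) one_ne_zero
        simp only [one_mul, div_one] at h1
        filter_upwards [h1.eventually (gt_mem_nhds hβa)] with n hn
        have h2 : (0 : ℝ) < (⌈β ^ n⌉₊ : ℝ) := by have := aux_one_le hβ n; positivity
        have h3 : β ^ n ≠ 0 := by positivity
        have h4 : β ≠ 0 := by positivity
        have e : (⌈β ^ (n + 1)⌉₊ : ℝ) / β ^ (n + 1) * β / ((⌈β ^ n⌉₊ : ℝ) / β ^ n)
            = (⌈β ^ (n + 1)⌉₊ : ℝ) / (⌈β ^ n⌉₊ : ℝ) := by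
          have h5 := h2.ne'
          generalize (⌈β ^ (n + 1)⌉₊ : ℝ) = u
          generalize (⌈β ^ n⌉₊ : ℝ) = v at *
          rw [pow_succ]
          field_simp
        have hn' : (⌈β ^ (n + 1)⌉₊ : ℝ) / (⌈β ^ n⌉₊ : ℝ) < a := by
          rw [← e]; exact hn
        exact ((div_lt_iff₀ h2).1 hn').le
      · refine ((H β hβ).add (hlim.comp (aux_ceil_top hβ))).congr fun n => ?_
        have h1 := aux_one_le hβ n
        have h2 : (⌈β ^ n⌉₊ : ℝ) ≠ 0 := by positivity
        rw [hsum _ h1]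
        simp only [Function.comp]
        field_simp
  have := key.sub hlim
  rw [add_sub_cancel_right] at this
  refine this.congr' ?_
  filter_upwards [eventually_ge_atTop 1] with n hn
  have h2 : (n : ℝ) ≠ 0 := by positivity
  rw [hsum _ hn]
  field_simp
  ring

/-- A bounded real sequence is Cesàro convergent to `ℓ` iff for every `α > 1` the
block averages over `[α^k, α^(k+1))` converge to `ℓ`. -/
theorem cesaro_iff_forall_block_avg (x : ℕ → ℝ) (ℓ : ℝ)
    (hbdd : ∃ C : ℝ, ∀ n : ℕ, 1 ≤ n → |x n| ≤ C) :
    Tendsto (fun n : ℕ => (1 / (n : ℝ)) * ∑ i ∈ Finset.Icc 1 n, x i) atTop (nhds ℓ) ↔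
      ∀ α : ℝ, 1 < α →
        Tendsto (fun k : ℕ =>
            (1 / (α ^ (k + 1) - α ^ k)) * ∑ i ∈ Finset.Ico ⌈α ^ k⌉₊ ⌈α ^ (k + 1)⌉₊, x i)
          atTop (nhds ℓ) := by
  rw [aux_shift]
  exact ⟨fun H α h => aux_fwd x ℓ H h,
    fun H => aux_bwd x ℓ hbdd fun α h => aux_sub x ℓ h (H α h)⟩
end

section
/- Let (x_n)_{n≥1} be a bounded real sequence such that for every real number α > 1 one has lim_{k→∞} (1/(α^{k+1} − α^k)) · Σ_{α^k ≤ i < α^{k+1}} x_i = ℓ, where the sum ranges over positive integers i with α^k ≤ i < α^{k+1}. Then (x_n) is Cesàro convergent to ℓ. -/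
open Filter

lemma block_sub (x : ℕ → ℝ) (ℓ : ℝ) (α : ℝ) (hα : 1 < α)
    (h : Tendsto (fun k : ℕ =>
          (1 / (α ^ (k + 1) - α ^ k)) * ∑ i ∈ Finset.Ico ⌈α ^ k⌉₊ ⌈α ^ (k + 1)⌉₊, x i)
        atTop (nhds ℓ)) :
    Tendsto (fun k : ℕ => (∑ i ∈ Finset.Ico 1 ⌈α ^ k⌉₊, x i) / (⌈α ^ k⌉₊ : ℝ))
      atTop (nhds ℓ) := by
  have hpow : Tendsto (fun k : ℕ => α ^ k) atTop atTop := tendsto_pow_atTop_atTop_of_one_lt hα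
  have hgpos : ∀ k : ℕ, 0 < α ^ (k + 1) - α ^ k := fun k =>
    sub_pos.2 (pow_lt_pow_right₀ hα (Nat.lt_succ_self k))
  have hsg : ∀ n : ℕ, ∑ k ∈ Finset.range n, (α ^ (k + 1) - α ^ k) = α ^ n - 1 := fun n => by
    rw [Finset.sum_range_sub (fun k => α ^ k)]; simp
  have hsT : ∀ n : ℕ, ∑ k ∈ Finset.range n, ∑ i ∈ Finset.Ico ⌈α ^ k⌉₊ ⌈α ^ (k + 1)⌉₊, x i
      = ∑ i ∈ Finset.Ico 1 ⌈α ^ n⌉₊, x i := by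
    intro n
    induction n with
    | zero => simp
    | succ n ih =>
      rw [Finset.sum_range_succ, ih, Finset.sum_Ico_consecutive]
      · exact Nat.one_le_ceil_iff.2 (by positivity)
      · exact Nat.ceil_mono (sub_pos.1 (hgpos n)).le
  have hinf : Tendsto (fun n : ℕ => α ^ n - 1) atTop atTop :=
    tendsto_atTop_add_const_right _ (-1) hpow
  have ho : (fun k : ℕ => (∑ i ∈ Finset.Ico ⌈α ^ k⌉₊ ⌈α ^ (k + 1)⌉₊, x i)
      - ℓ * (α ^ (k + 1) - α ^ k)) =o[atTop] (fun k : ℕ => α ^ (k + 1) - α ^ k) := by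
    rw [Asymptotics.isLittleO_iff_tendsto (fun k hk => absurd hk (hgpos k).ne')]
    have := h.sub_const ℓ
    rw [sub_self] at this
    refine this.congr fun k => ?_
    have := (hgpos k).ne'
    field_simp
  have ho2 := ho.sum_range (fun k => (hgpos k).le) (by simpa only [hsg] using hinf)
  simp only [Finset.sum_sub_distrib, ← Finset.mul_sum, hsT] at ho2
  simp only [← Finset.sum_sub_distrib, hsg] at ho2
  have h3 := (ho2.tendsto_div_nhds_zero).add_const ℓ
  have h4 : Tendsto (fun n : ℕ => (⌈α ^ n⌉₊ : ℝ) / α ^ n) atTop (nhds 1) :=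
    (tendsto_nat_ceil_div_atTop (R := ℝ)).comp hpow
  have h5 : Tendsto (fun n : ℕ => 1 - (α ^ n)⁻¹) atTop (nhds (1 - 0)) :=
    tendsto_const_nhds.sub (tendsto_inv_atTop_zero.comp hpow)
  have h6 := (h3.mul h5).div h4 one_ne_zero
  simp only [zero_add, sub_zero, mul_one, div_one] at h6
  refine h6.congr' ?_
  filter_upwards [hinf.eventually_gt_atTop 0] with n hn
  have a1 : α ^ n ≠ 0 := by positivity
  have a2 : (⌈α ^ n⌉₊ : ℝ) ≠ 0 := by
    have : 0 < ⌈α ^ n⌉₊ := Nat.ceil_pos.2 (by positivity)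
    positivity
  have a3 := hn.ne'
  simp only [Pi.div_apply]
  field_simp
  ring

/-- If a bounded real sequence has block averages over `[α^k, α^(k+1))` converging to `ℓ`
for every `α > 1`, then it is Cesàro convergent to `ℓ`. -/
theorem cesaro_of_forall_block_avg (x : ℕ → ℝ) (ℓ : ℝ)
    (hbdd : ∃ C : ℝ, ∀ n : ℕ, 1 ≤ n → |x n| ≤ C)
    (hblock : ∀ α : ℝ, 1 < α →
      Tendsto (fun k : ℕ =>
          (1 / (α ^ (k + 1) - α ^ k)) * ∑ i ∈ Finset.Ico ⌈α ^ k⌉₊ ⌈α ^ (k + 1)⌉₊, x i)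
        atTop (nhds ℓ)) :
    Tendsto (fun n : ℕ => (1 / (n : ℝ)) * ∑ i ∈ Finset.Icc 1 n, x i) atTop (nhds ℓ) := by
  obtain ⟨C, hC⟩ := hbdd
  have hinv : Tendsto (fun n : ℕ => (n : ℝ)⁻¹) atTop (nhds 0) := tendsto_inv_atTop_nhds_zero_nat
  have hsum : ∀ n : ℕ, 1 ≤ n → ∑ i ∈ Finset.Ico 1 n, (x i + C)
      = ∑ i ∈ Finset.Ico 1 n, x i + C * (n - 1) := by
    intro n hn
    rw [Finset.sum_add_distrib]
    simp [Nat.cast_sub hn, mul_comm]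
  have hmain : Tendsto (fun n : ℕ => (∑ i ∈ Finset.Ico 1 n, (x i + C)) / (n : ℝ)) atTop
      (nhds (ℓ + C)) := by
    refine tendsto_div_of_monotone_of_exists_subseq_tendsto_div _ (ℓ + C) ?_ ?_
    · intro m n hmn
      refine Finset.sum_le_sum_of_subset_of_nonneg (Finset.Ico_subset_Ico_right hmn) ?_
      intro i hi _
      have := abs_le.1 (hC i (Finset.mem_Ico.1 hi).1)
      linarith
    · intro a ha
      obtain ⟨b, hb1, hba⟩ := exists_between ha
      have hpow : Tendsto (fun k : ℕ => b ^ k) atTop atTop :=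
        tendsto_pow_atTop_atTop_of_one_lt hb1
      have hc : Tendsto (fun k : ℕ => ⌈b ^ k⌉₊) atTop atTop := tendsto_nat_ceil_atTop.comp hpow
      refine ⟨fun k => ⌈b ^ k⌉₊, ?_, hc, ?_⟩
      · filter_upwards [hpow.eventually_ge_atTop (1 / (a - b))] with k hk
        have h1 : (⌈b ^ (k + 1)⌉₊ : ℝ) < b ^ (k + 1) + 1 := Nat.ceil_lt_add_one (by positivity)
        have h2 : b ^ k ≤ (⌈b ^ k⌉₊ : ℝ) := Nat.le_ceil _
        rw [div_le_iff₀ (by linarith)] at hk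
        have h3 : a * b ^ k ≤ a * (⌈b ^ k⌉₊ : ℝ) := by gcongr
        rw [pow_succ] at h1
        rw [pow_succ]
        linarith
      · have h1 := block_sub x ℓ b hb1 (hblock b hb1)
        have h2 : Tendsto (fun k : ℕ => C * (1 - (⌈b ^ k⌉₊ : ℝ)⁻¹)) atTop
            (nhds (C * (1 - 0))) :=
          (tendsto_const_nhds.sub (hinv.comp hc)).const_mul C
        have h3 := h1.add h2
        simp only [sub_zero, mul_one] at h3
        refine h3.congr' ?_
        filter_upwards [hc.eventually_ge_atTop 1] with k hk
        rw [hsum _ hk]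
        have : (⌈b ^ k⌉₊ : ℝ) ≠ 0 := by positivity
        field_simp
  have hx : Tendsto (fun n : ℕ => (x n + C) * (n : ℝ)⁻¹) atTop (nhds 0) := by
    refine squeeze_zero_norm' (a := fun n : ℕ => (2 * C) * (n : ℝ)⁻¹) ?_
      (by simpa using hinv.const_mul (2 * C))
    filter_upwards [eventually_ge_atTop 1] with n hn
    have := abs_le.1 (hC n hn)
    rw [Real.norm_eq_abs, abs_mul, abs_of_nonneg (a := (n : ℝ)⁻¹) (by positivity)]
    gcongr
    rw [abs_le]
    constructor <;> linarith
  have h := (hmain.add hx).sub_const C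
  simp only [add_zero, add_sub_cancel_right] at h
  refine h.congr' ?_
  filter_upwards [eventually_ge_atTop 1] with n hn
  rw [hsum n hn, ← Finset.Ico_add_one_right_eq_Icc, Finset.sum_Ico_succ_top hn]
  have : (n : ℝ) ≠ 0 := by positivity
  field_simp
  ring
end

section
/- Let (x_n)_{n≥1} be a bounded real sequence that is Cesàro convergent to ℓ, and let α > 1 be a real number. Then lim_{k→∞} (1/(α^{k+1} − α^k)) · Σ_{α^k ≤ i < α^{k+1}} x_i = ℓ, where the sum ranges over positive integers i with α^k ≤ i < α^{k+1}. -/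
open Filter

/-- If a bounded real sequence is Cesàro convergent to `ℓ`, then for any fixed `α > 1` the
block averages over `[α^k, α^(k+1))` converge to `ℓ`. -/
theorem block_avg_of_cesaro (x : ℕ → ℝ) (ℓ : ℝ)
    (hbdd : ∃ C : ℝ, ∀ n : ℕ, 1 ≤ n → |x n| ≤ C)
    (hcesaro : Tendsto (fun n : ℕ => (1 / (n : ℝ)) * ∑ i ∈ Finset.Icc 1 n, x i) atTop (nhds ℓ))
    (α : ℝ) (hα : 1 < α) :
    Tendsto (fun k : ℕ =>
        (1 / (α ^ (k + 1) - α ^ k)) * ∑ i ∈ Finset.Ico ⌈α ^ k⌉₊ ⌈α ^ (k + 1)⌉₊, x i)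
      atTop (nhds ℓ) := by
  have hα0 : (0 : ℝ) < α := by linarith
  have hpow : Tendsto (fun k : ℕ => α ^ k) atTop atTop := tendsto_pow_atTop_atTop_of_one_lt hα
  have hone : ∀ k : ℕ, 1 ≤ ⌈α ^ k⌉₊ := fun k => Nat.one_le_iff_ne_zero.mpr
    (Nat.ceil_pos.mpr (pow_pos hα0 k)).ne'
  have hceil : Tendsto (fun k : ℕ => ⌈α ^ k⌉₊) atTop atTop := tendsto_nat_ceil_atTop.comp hpow
  have hm : Tendsto (fun k : ℕ => ⌈α ^ k⌉₊ - 1) atTop atTop :=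
    (tendsto_sub_atTop_nat 1).comp hceil
  have hratio : Tendsto (fun k : ℕ => ((⌈α ^ k⌉₊ - 1 : ℕ) : ℝ) / α ^ k) atTop (nhds 1) := by
    have h1 : Tendsto (fun k : ℕ => (⌈α ^ k⌉₊ : ℝ) / α ^ k) atTop (nhds 1) :=
      (tendsto_nat_ceil_div_atTop (R := ℝ)).comp hpow
    have h2 : Tendsto (fun k : ℕ => (α ^ k)⁻¹) atTop (nhds 0) := tendsto_inv_atTop_zero.comp hpow
    have h3 := h1.sub h2
    rw [sub_zero] at h3
    refine h3.congr fun k => ?_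
    rw [Nat.cast_sub (hone k)]
    push_cast
    ring
  have hG : Tendsto (fun k : ℕ => (∑ i ∈ Finset.Ico 1 ⌈α ^ k⌉₊, x i) / α ^ k)
      atTop (nhds ℓ) := by
    have h := (hcesaro.comp hm).mul hratio
    rw [mul_one] at h
    refine h.congr fun k => ?_
    have hI : Finset.Icc 1 (⌈α ^ k⌉₊ - 1) = Finset.Ico 1 ⌈α ^ k⌉₊ := by
      ext i
      have := hone k
      simp only [Finset.mem_Icc, Finset.mem_Ico]
      omega
    simp only [Function.comp]
    rw [← hI]
    generalize ⌈α ^ k⌉₊ - 1 = m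
    rcases Nat.eq_zero_or_pos m with rfl | hmp
    · simp
    · have : (m : ℝ) ≠ 0 := by positivity
      have : α ^ k ≠ 0 := by positivity
      field_simp
  have hα1 : α - 1 ≠ 0 := by linarith
  have hfin := (((hG.comp (tendsto_add_atTop_nat 1)).const_mul α).sub hG).div_const (α - 1)
  have hl : (α * ℓ - ℓ) / (α - 1) = ℓ := by
    field_simp
  rw [hl] at hfin
  refine hfin.congr fun k => ?_
  have hle : ⌈α ^ k⌉₊ ≤ ⌈α ^ (k + 1)⌉₊ :=
    Nat.ceil_mono (pow_le_pow_right₀ hα.le (Nat.le_succ k))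
  have hsum := Finset.sum_Ico_consecutive x (hone k) hle
  simp only [Function.comp]
  rw [← hsum]
  have hk : α ^ k ≠ 0 := by positivity
  have hd : α ^ (k + 1) - α ^ k = α ^ k * (α - 1) := by ring
  rw [hd, pow_succ]
  field_simp
  ring
end

section
/- A bounded nonnegative real sequence (x_n)_{n≥1} is Cesàro convergent to 0 if and only if there exists some real number α > 1 such that lim_{k→∞} (1/(α^{k+1} − α^k)) · Σ_{α^k ≤ i < α^{k+1}} x_i = 0, where the sum ranges over positive integers i with α^k ≤ i < α^{k+1}. -/
open Filter

/-- A bounded nonnegative real sequence is Cesàro convergent to `0` iff for some `α > 1` the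
block averages over `[α^k, α^(k+1))` converge to `0`. -/
theorem nonneg_cesaro_iff_exists_block_avg (x : ℕ → ℝ)
    (hbdd : ∃ C : ℝ, ∀ n : ℕ, 1 ≤ n → |x n| ≤ C)
    (hnonneg : ∀ n : ℕ, 1 ≤ n → 0 ≤ x n) :
    Tendsto (fun n : ℕ => (1 / (n : ℝ)) * ∑ i ∈ Finset.Icc 1 n, x i) atTop (nhds 0) ↔
      ∃ α : ℝ, 1 < α ∧
        Tendsto (fun k : ℕ =>
            (1 / (α ^ (k + 1) - α ^ k)) * ∑ i ∈ Finset.Ico ⌈α ^ k⌉₊ ⌈α ^ (k + 1)⌉₊, x i)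
          atTop (nhds 0) := by
  constructor
  · intro h
    refine ⟨2, by norm_num, ?_⟩
    have h2 : Tendsto (fun k : ℕ => 2 ^ (k + 1)) atTop (atTop : Filter ℕ) :=
      (tendsto_pow_atTop_atTop_of_one_lt (by norm_num : 1 < 2)).comp (tendsto_add_atTop_nat 1)
    have h3 := (h.comp h2).const_mul 2
    rw [mul_zero] at h3
    have hc : ∀ k : ℕ, ⌈(2 : ℝ) ^ k⌉₊ = 2 ^ k := by
      intro k
      have : ((2 : ℝ) ^ k) = ((2 ^ k : ℕ) : ℝ) := by push_cast; rfl
      rw [this, Nat.ceil_natCast]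
    refine squeeze_zero ?_ ?_ h3
    · intro k
      rw [hc, hc]
      have : (2 : ℝ) ^ (k + 1) - 2 ^ k = 2 ^ k := by ring
      rw [this]
      refine mul_nonneg (by positivity) (Finset.sum_nonneg ?_)
      intro i hi
      exact hnonneg i (le_trans Nat.one_le_two_pow (Finset.mem_Ico.1 hi).1)
    · intro k
      rw [hc, hc]
      have : (2 : ℝ) ^ (k + 1) - 2 ^ k = 2 ^ k := by ring
      rw [this]
      have hs : ∑ i ∈ Finset.Ico (2 ^ k) (2 ^ (k + 1)), x i
          ≤ ∑ i ∈ Finset.Icc 1 (2 ^ (k + 1)), x i := by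
        refine Finset.sum_le_sum_of_subset_of_nonneg ?_ ?_
        · intro i hi
          have := Finset.mem_Ico.1 hi
          exact Finset.mem_Icc.2 ⟨le_trans Nat.one_le_two_pow this.1, this.2.le⟩
        · intro i hi _
          exact hnonneg i (Finset.mem_Icc.1 hi).1
      have he : (2 : ℝ) * (1 / ((2 ^ (k + 1) : ℕ) : ℝ)) = 1 / 2 ^ k := by
        push_cast
        rw [pow_succ]
        field_simp
      simp only [Function.comp]
      rw [← mul_assoc, he]
      exact mul_le_mul_of_nonneg_left hs (by positivity)
  · rintro ⟨α, hα, h⟩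
    have hα0 : 0 < α := by linarith
    have hone : ∀ k : ℕ, 1 ≤ ⌈α ^ k⌉₊ := fun k => Nat.one_le_ceil_iff.2 (by positivity)
    have hmono : ∀ k : ℕ, ⌈α ^ k⌉₊ ≤ ⌈α ^ (k + 1)⌉₊ := fun k =>
      Nat.ceil_le_ceil (pow_le_pow_right₀ hα.le (Nat.le_succ k))
    rw [Metric.tendsto_atTop] at h ⊢
    intro ε hε
    have hε' : 0 < ε / (2 * α) := by positivity
    obtain ⟨K, hK⟩ := h _ hε'
    have hblock : ∀ j ≥ K, ∑ i ∈ Finset.Ico ⌈α ^ j⌉₊ ⌈α ^ (j + 1)⌉₊, x i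
        ≤ ε / (2 * α) * (α ^ (j + 1) - α ^ j) := by
      intro j hj
      have h1 := hK j hj
      rw [Real.dist_eq, sub_zero] at h1
      have h2 := (le_abs_self _).trans h1.le
      have hd : 0 < α ^ (j + 1) - α ^ j := by
        have : α ^ j < α ^ (j + 1) := pow_lt_pow_right₀ hα (Nat.lt_succ_self j)
        linarith
      rwa [one_div, inv_mul_le_iff₀ hd, mul_comm] at h2
    set P : ℕ → ℝ := fun k => ∑ i ∈ Finset.Ico 1 ⌈α ^ k⌉₊, x i with hP
    have hbound : ∀ k ≥ K, P k ≤ P K + ε / (2 * α) * (α ^ k - α ^ K) := by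
      intro k hk
      induction k, hk using Nat.le_induction with
      | base => simp
      | succ k hk ih =>
        have e : P (k + 1) = P k + ∑ i ∈ Finset.Ico ⌈α ^ k⌉₊ ⌈α ^ (k + 1)⌉₊, x i :=
          (Finset.sum_Ico_consecutive x (hone k) (hmono k)).symm
        have := hblock k hk
        rw [e]
        linarith
    obtain ⟨N, hN⟩ := exists_nat_gt (max (α ^ K) (2 * P K / ε))
    refine ⟨N, fun n hn => ?_⟩
    have hnN : (N : ℝ) ≤ n := by exact_mod_cast hn
    have hn1 : α ^ K < n := lt_of_le_of_lt (le_max_left _ _) (hN.trans_le hnN)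
    have hn2 : 2 * P K / ε < n := lt_of_le_of_lt (le_max_right _ _) (hN.trans_le hnN)
    have hn3 : (1 : ℝ) ≤ n := (one_le_pow₀ hα.le).trans hn1.le
    obtain ⟨k, hk1, hk2⟩ := exists_nat_pow_near hn3 hα
    have hKk : K ≤ k + 1 := by
      by_contra hcon
      have := pow_le_pow_right₀ hα.le (not_le.1 hcon).le
      linarith
    have hsum : ∑ i ∈ Finset.Icc 1 n, x i ≤ P (k + 1) := by
      refine Finset.sum_le_sum_of_subset_of_nonneg ?_ ?_
      · intro i hi
        have := Finset.mem_Icc.1 hi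
        exact Finset.mem_Ico.2 ⟨this.1, this.2.trans_lt (Nat.lt_ceil.2 hk2)⟩
      · intro i hi _
        exact hnonneg i (Finset.mem_Ico.1 hi).1
    have hs0 : 0 ≤ ∑ i ∈ Finset.Icc 1 n, x i :=
      Finset.sum_nonneg fun i hi => hnonneg i (Finset.mem_Icc.1 hi).1
    have hb := hbound (k + 1) hKk
    have hnpos : (0 : ℝ) < n := by linarith
    rw [Real.dist_eq, sub_zero, abs_of_nonneg (by positivity), one_div, inv_mul_lt_iff₀ hnpos]
    have h4 : ε / (2 * α) * (α ^ (k + 1) - α ^ K) ≤ ε / 2 * n := by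
      have : ε / 2 * n = ε / (2 * α) * (α * n) := by field_simp
      rw [this]
      refine mul_le_mul_of_nonneg_left ?_ hε'.le
      have h5 : α ^ (k + 1) ≤ α * n := by
        rw [pow_succ, mul_comm]
        exact mul_le_mul_of_nonneg_left hk1 hα0.le
      have : 0 < α ^ K := by positivity
      linarith
    rw [div_lt_iff₀ hε] at hn2
    linarith
end

section
/- Let (x_n)_{n≥1} be a bounded nonnegative real sequence and let α > 1 be a real number such that lim_{k→∞} (1/(α^{k+1} − α^k)) · Σ_{α^k ≤ i < α^{k+1}} x_i = 0, where the sum ranges over positive integers i with α^k ≤ i < α^{k+1}. Then (x_n) is Cesàro convergent to 0. -/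
open Filter

/-- If a bounded nonnegative real sequence has block averages over `[α^k, α^(k+1))` converging
to `0` for some `α > 1`, then it is Cesàro convergent to `0`. -/
theorem nonneg_cesaro_of_block_avg (x : ℕ → ℝ)
    (hbdd : ∃ C : ℝ, ∀ n : ℕ, 1 ≤ n → |x n| ≤ C)
    (hnonneg : ∀ n : ℕ, 1 ≤ n → 0 ≤ x n)
    (α : ℝ) (hα : 1 < α)
    (hblock : Tendsto (fun k : ℕ =>
        (1 / (α ^ (k + 1) - α ^ k)) * ∑ i ∈ Finset.Ico ⌈α ^ k⌉₊ ⌈α ^ (k + 1)⌉₊, x i)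
      atTop (nhds 0)) :
    Tendsto (fun n : ℕ => (1 / (n : ℝ)) * ∑ i ∈ Finset.Icc 1 n, x i) atTop (nhds 0) := by
  have hα0 : 0 < α := by linarith
  have hpos : ∀ k : ℕ, 0 < α ^ k := fun k => pow_pos hα0 k
  have hone : ∀ k : ℕ, 1 ≤ ⌈α ^ k⌉₊ := fun k => Nat.one_le_iff_ne_zero.mpr
    (Nat.pos_iff_ne_zero.mp (Nat.ceil_pos.mpr (hpos k)))
  rw [Metric.tendsto_atTop]
  intro ε hε
  have hδ : 0 < ε / (2 * α) := by positivity
  obtain ⟨K, hK⟩ := Metric.tendsto_atTop.mp hblock (ε / (2 * α)) hδ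
  set δ := ε / (2 * α) with hδdef
  have hblk : ∀ k, K ≤ k → ∑ i ∈ Finset.Ico ⌈α ^ k⌉₊ ⌈α ^ (k + 1)⌉₊, x i
      ≤ δ * (α ^ (k + 1) - α ^ k) := by
    intro k hk
    have h := hK k hk
    rw [Real.dist_eq, sub_zero] at h
    have h2 := (abs_lt.mp h).2
    have hd : 0 < α ^ (k + 1) - α ^ k := by
      have := pow_lt_pow_right₀ hα (Nat.lt_succ_self k)
      simpa using this
    rw [one_div, inv_mul_eq_div, div_lt_iff₀ hd] at h2
    exact h2.le
  set A := ∑ i ∈ Finset.Ico 1 ⌈α ^ K⌉₊, x i with hA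
  have hA0 : 0 ≤ A := Finset.sum_nonneg fun i hi => hnonneg i (Finset.mem_Ico.mp hi).1
  have hS : ∀ m, K ≤ m → ∑ i ∈ Finset.Ico 1 ⌈α ^ m⌉₊, x i ≤ A + δ * α ^ m := by
    intro m hm
    induction m, hm using Nat.le_induction with
    | base =>
      have := mul_pos hδ (hpos K)
      linarith
    | succ k hk ih =>
      have hle : ⌈α ^ k⌉₊ ≤ ⌈α ^ (k + 1)⌉₊ :=
        Nat.ceil_mono (pow_le_pow_right₀ hα.le (Nat.le_succ k))
      rw [← Finset.sum_Ico_consecutive _ (hone k) hle]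
      have := hblk k hk
      linarith
  refine ⟨max (⌈α ^ K⌉₊) (⌊2 * A / ε⌋₊ + 1), fun n hn => ?_⟩
  have hn1 : ⌈α ^ K⌉₊ ≤ n := le_trans (le_max_left _ _) hn
  have hn2 : ⌊2 * A / ε⌋₊ + 1 ≤ n := le_trans (le_max_right _ _) hn
  have hnpos : 1 ≤ n := (hone K).trans hn1
  have hnR : (1 : ℝ) ≤ n := by exact_mod_cast hnpos
  have hAn : 2 * A < n * ε := by
    rw [← div_lt_iff₀ hε]
    exact (Nat.floor_lt (by positivity)).mp hn2
  obtain ⟨m, hm1, hm2⟩ := exists_nat_pow_near hnR hα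
  have hKm : K ≤ m + 1 := by
    have h1 : α ^ K < α ^ (m + 1) := (Nat.ceil_le.mp hn1).trans_lt hm2
    exact ((pow_lt_pow_iff_right₀ hα).mp h1).le
  have hsum0 : 0 ≤ ∑ i ∈ Finset.Icc 1 n, x i :=
    Finset.sum_nonneg fun i hi => hnonneg i (Finset.mem_Icc.mp hi).1
  have hsum : ∑ i ∈ Finset.Icc 1 n, x i ≤ A + δ * α ^ (m + 1) := by
    refine le_trans (Finset.sum_le_sum_of_subset_of_nonneg ?_ ?_) (hS (m + 1) hKm)
    · intro i hi
      rw [Finset.mem_Icc] at hi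
      exact Finset.mem_Ico.mpr ⟨hi.1, lt_of_le_of_lt hi.2 (Nat.lt_ceil.mpr hm2)⟩
    · intro i hi _
      exact hnonneg i (Finset.mem_Ico.mp hi).1
  have hδm : δ * α ^ (m + 1) ≤ ε / 2 * n := by
    have h1 : δ * α ^ (m + 1) = ε / 2 * α ^ m := by
      rw [hδdef, pow_succ]
      field_simp
    rw [h1]
    gcongr
  have hn0 : (0 : ℝ) < n := by linarith
  rw [Real.dist_eq, sub_zero, abs_of_nonneg (by positivity), one_div, inv_mul_eq_div,
    div_lt_iff₀ hn0]
  linarith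
end

section
/- For s ∈ [0,1], define A_s := ⋃_{n≥1} { 2^n + ⌊s·2^{n−1}⌋ + t : t = 1, …, 2^{n−1} } ⊆ ℕ. Then for every s ∈ [0,1], the lower asymptotic density of A_s equals 1/(2+s), i.e., liminf_{n→∞} (1/n) · #(A_s ∩ [1, n]) = 1/(2+s). -/
open Filter

/-- The set `A_s = ⋃_{n ≥ 1} {2^n + ⌊s·2^(n-1)⌋ + t : t = 1, …, 2^(n-1)}`. -/
def blockSet (s : ℝ) : Set ℕ :=
  {m : ℕ | ∃ n : ℕ, 1 ≤ n ∧ ∃ t : ℕ, 1 ≤ t ∧ t ≤ 2 ^ (n - 1) ∧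
    m = 2 ^ n + ⌊s * (2 : ℝ) ^ (n - 1)⌋₊ + t}

/-- start of the block of index `k + 1` -/
noncomputable def bstart (s : ℝ) (k : ℕ) : ℕ := 2 ^ (k + 1) + ⌊s * (2 : ℝ) ^ k⌋₊

lemma mem_blockSet_iff (s : ℝ) (m : ℕ) :
    m ∈ blockSet s ↔ ∃ k, bstart s k < m ∧ m ≤ bstart s k + 2 ^ k := by
  constructor
  · rintro ⟨n, hn, t, h1, h2, rfl⟩
    obtain ⟨k, rfl⟩ : ∃ k, n = k + 1 := ⟨n - 1, by omega⟩
    refine ⟨k, ?_, ?_⟩ <;> simp only [bstart, Nat.add_sub_cancel] at * <;> omega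
  · rintro ⟨k, h1, h2⟩
    refine ⟨k + 1, by omega, m - bstart s k, by omega, ?_, ?_⟩
    · simp only [Nat.add_sub_cancel]; omega
    · simp only [Nat.add_sub_cancel]
      change m = bstart s k + (m - bstart s k)
      omega

lemma bstart_mono {s : ℝ} (hs : 0 ≤ s) : Monotone (bstart s) := by
  intro i j h
  unfold bstart
  have h1 : (2:ℕ) ^ (i+1) ≤ 2 ^ (j+1) := Nat.pow_le_pow_right (by norm_num) (by omega)
  have h2 : ⌊s * (2 : ℝ) ^ i⌋₊ ≤ ⌊s * (2 : ℝ) ^ j⌋₊ := by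
    apply Nat.floor_mono
    exact mul_le_mul_of_nonneg_left (pow_le_pow_right₀ (by norm_num) h) hs
  omega

lemma bstart_le {s : ℝ} (hs : 0 ≤ s) (k : ℕ) : (bstart s k : ℝ) ≤ (2 + s) * 2 ^ k := by
  unfold bstart
  have := Nat.floor_le (show 0 ≤ s * (2:ℝ)^k by positivity)
  push_cast
  rw [pow_succ]; linarith

lemma lt_bstart (s : ℝ) (k : ℕ) : (2 + s) * 2 ^ k < (bstart s k : ℝ) + 1 := by
  unfold bstart
  have := Nat.lt_floor_add_one (s * (2:ℝ)^k)
  push_cast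
  rw [pow_succ]; linarith

lemma bend_le {s : ℝ} (hs1 : s ≤ 1) (k : ℕ) :
    bstart s k + 2 ^ k ≤ bstart s (k + 1) := by
  have h1 : ⌊s * (2 : ℝ) ^ k⌋₊ ≤ 2 ^ k := by
    apply Nat.floor_le_of_le
    push_cast
    have : (0:ℝ) < 2 ^ k := by positivity
    nlinarith
  unfold bstart
  have e : (2:ℕ) ^ (k+1+1) = 4 * 2 ^ k := by ring
  have e' : (2:ℕ) ^ (k+1) = 2 * 2 ^ k := by ring
  omega

/-- counting function -/
noncomputable def bcount (s : ℝ) (N : ℕ) : ℕ := Nat.card (blockSet s ∩ Set.Icc 1 N : Set ℕ)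

lemma bcount_succ_mem {s : ℝ} {N : ℕ} (h : N + 1 ∈ blockSet s) :
    bcount s (N + 1) = bcount s N + 1 := by
  unfold bcount
  rw [Nat.card_coe_set_eq, Nat.card_coe_set_eq]
  rw [← Set.ncard_insert_of_notMem (a := N + 1) (by simp) ((Set.finite_Icc 1 N).inter_of_right _)]
  congr 1
  ext m
  simp only [Set.mem_inter_iff, Set.mem_Icc, Set.mem_insert_iff]
  constructor
  · rintro ⟨a, b, c⟩
    by_cases e : m = N + 1
    · exact Or.inl e
    · exact Or.inr ⟨a, b, by omega⟩
  · rintro (rfl | ⟨a, b, c⟩)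
    · exact ⟨h, by omega, le_rfl⟩
    · exact ⟨a, b, by omega⟩

lemma bcount_succ_notMem {s : ℝ} {N : ℕ} (h : N + 1 ∉ blockSet s) :
    bcount s (N + 1) = bcount s N := by
  unfold bcount
  congr 2
  ext m
  simp only [Set.mem_inter_iff, Set.mem_Icc]
  constructor
  · rintro ⟨a, b, c⟩
    have e : m ≠ N + 1 := by rintro rfl; exact h a
    exact ⟨a, b, by omega⟩
  · rintro ⟨a, b, c⟩
    exact ⟨a, b, by omega⟩

lemma bcount_first {s : ℝ} (hs : 0 ≤ s) {N : ℕ} (h : N ≤ bstart s 0) : bcount s N = 0 := by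
  unfold bcount
  have : blockSet s ∩ Set.Icc 1 N = ∅ := by
    ext m
    simp only [Set.mem_inter_iff, Set.mem_Icc, Set.mem_empty_iff_false, iff_false]
    rintro ⟨a, b, c⟩
    obtain ⟨k, h1, h2⟩ := (mem_blockSet_iff s m).1 a
    have := bstart_mono hs (Nat.zero_le k)
    omega
  rw [this]; simp

lemma bcount_block {s : ℝ} (k u : ℕ) (hu : u ≤ 2 ^ k) :
    bcount s (bstart s k + u) = bcount s (bstart s k) + u := by
  induction u with
  | zero => rfl
  | succ u ih =>
    rw [← add_assoc, bcount_succ_mem, ih (by omega), add_assoc]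
    exact (mem_blockSet_iff _ _).2 ⟨k, by omega, by omega⟩

lemma bcount_gap {s : ℝ} (hs : 0 ≤ s) (k u : ℕ)
    (hu : bstart s k + 2 ^ k + u ≤ bstart s (k + 1)) :
    bcount s (bstart s k + 2 ^ k + u) = bcount s (bstart s k) + 2 ^ k := by
  induction u with
  | zero => exact bcount_block k _ le_rfl
  | succ u ih =>
    rw [← add_assoc, bcount_succ_notMem, ih (by omega)]
    intro h
    obtain ⟨j, h1, h2⟩ := (mem_blockSet_iff _ _).1 h
    rcases Nat.lt_or_ge k j with hj | hj
    · have := bstart_mono hs (show k + 1 ≤ j from hj)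
      omega
    · have := bstart_mono hs hj
      have h3 : (2:ℕ) ^ j ≤ 2 ^ k := Nat.pow_le_pow_right (by norm_num) hj
      omega

lemma bcount_bstart {s : ℝ} (hs : 0 ≤ s) (hs1 : s ≤ 1) (k : ℕ) :
    bcount s (bstart s k) + 1 = 2 ^ k := by
  induction k with
  | zero => rw [bcount_first hs le_rfl]; rfl
  | succ k ih =>
    have h := bend_le hs1 k
    obtain ⟨u, hu⟩ := Nat.exists_eq_add_of_le h
    rw [hu, bcount_gap hs k u hu.ge, pow_succ]
    omega

lemma le_bcount {s : ℝ} (hs : 0 ≤ s) (hs1 : s ≤ 1) (k : ℕ) :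
    ∀ N ≤ bstart s k, (N : ℝ) ≤ (2 + s) * ((bcount s N : ℝ) + 1) := by
  induction k with
  | zero =>
    intro N hN
    rw [bcount_first hs hN]
    have h1 := bstart_le hs 0
    have h2 : (N : ℝ) ≤ bstart s 0 := by exact_mod_cast hN
    simp only [pow_zero, Nat.cast_zero] at *
    linarith
  | succ k ih =>
    intro N hN
    have h0 : (bcount s (bstart s k) : ℝ) + 1 = 2 ^ k := by exact_mod_cast bcount_bstart hs hs1 k
    rcases le_total N (bstart s k) with h | h
    · exact ih N h
    rcases le_total N (bstart s k + 2 ^ k) with h' | h'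
    · obtain ⟨u, rfl⟩ := Nat.exists_eq_add_of_le h
      rw [bcount_block k u (by omega)]
      have := bstart_le hs k
      have hu : (0:ℝ) ≤ u := by positivity
      push_cast
      nlinarith
    · obtain ⟨u, rfl⟩ := Nat.exists_eq_add_of_le h'
      rw [bcount_gap hs k u hN]
      have h1 := bstart_le hs (k + 1)
      have h2 : ((bstart s k + 2 ^ k + u : ℕ) : ℝ) ≤ bstart s (k + 1) := by exact_mod_cast hN
      rw [pow_succ] at h1
      refine h2.trans (h1.trans (le_of_eq ?_))
      push_cast
      linear_combination (-(2 + s)) * h0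

lemma lt_bstart_self (s : ℝ) (k : ℕ) : k < bstart s k := by
  have : k + 1 < 2 ^ (k + 1) := Nat.lt_two_pow_self
  unfold bstart
  omega

/-- For every `s ∈ [0,1]`, the lower asymptotic density of `A_s` equals `1/(2+s)`. -/
theorem blockSet_lower_density :
    ∀ s ∈ Set.Icc (0 : ℝ) 1,
      liminf (fun n : ℕ => (1 / (n : ℝ)) * Nat.card (blockSet s ∩ Set.Icc 1 n : Set ℕ)) atTop
        = 1 / (2 + s) := by
  rintro s ⟨hs, hs1⟩
  change liminf (fun n : ℕ => (1 / (n : ℝ)) * (bcount s n : ℝ)) atTop = 1 / (2 + s)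
  have hpos : 0 < 2 + s := by linarith
  have hbdd : IsBoundedUnder (· ≥ ·) atTop (fun n : ℕ => (1 / (n : ℝ)) * (bcount s n : ℝ)) :=
    isBoundedUnder_of ⟨0, fun n => by positivity⟩
  have hfreq : ∃ᶠ n : ℕ in atTop, (1 / (n : ℝ)) * (bcount s n : ℝ) ≤ 1 / (2 + s) := by
    rw [frequently_atTop]
    intro k
    refine ⟨bstart s k, (lt_bstart_self s k).le, ?_⟩
    have h0 : (bcount s (bstart s k) : ℝ) + 1 = 2 ^ k := by exact_mod_cast bcount_bstart hs hs1 k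
    have h1 := lt_bstart s k
    have h2 : (0:ℝ) < bstart s k := by
      exact_mod_cast (Nat.zero_le k).trans_lt (lt_bstart_self s k)
    rw [one_div_mul_eq_div, div_le_div_iff₀ h2 hpos]
    rw [← h0] at h1
    nlinarith
  apply le_antisymm
  · exact liminf_le_of_frequently_le hfreq hbdd
  · have ht : Tendsto (fun n : ℕ => 1 / (2 + s) - 1 / (n : ℝ)) atTop (nhds (1 / (2 + s))) := by
      simpa using (tendsto_const_nhds (x := 1 / (2 + s))).sub
        (tendsto_one_div_atTop_nhds_zero_nat (𝕜 := ℝ))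
    rw [← ht.liminf_eq]
    refine liminf_le_liminf ?_ ht.isBoundedUnder_ge (IsCoboundedUnder.of_frequently_le hfreq)
    filter_upwards [eventually_gt_atTop 0] with n hn
    have hn' : (0:ℝ) < n := by exact_mod_cast hn
    have h := le_bcount hs hs1 n n (lt_bstart_self s n).le
    rw [sub_le_iff_le_add, one_div_mul_eq_div, ← add_div, div_le_div_iff₀ hpos hn']
    linarith
end

section
/- For s ∈ [0,1], define A_s := ⋃_{n≥1} { 2^n + ⌊s·2^{n−1}⌋ + t : t = 1, …, 2^{n−1} } ⊆ ℕ. Then for every s ∈ [0,1], the upper asymptotic density of A_s equals 2/(3+s), i.e., limsup_{n→∞} (1/n) · #(A_s ∩ [1, n]) = 2/(3+s). -/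
open Filter

theorem bs_floor_le {s : ℝ} (hs : s ∈ Set.Icc (0 : ℝ) 1) (k : ℕ) :
    ⌊s * (2 : ℝ) ^ k⌋₊ ≤ 2 ^ k := by
  apply Nat.floor_le_of_le
  push_cast
  have : (0 : ℝ) < 2 ^ k := by positivity
  nlinarith [hs.2]

theorem bs_mem_iff {s : ℝ} (hs : s ∈ Set.Icc (0 : ℝ) 1) (k m : ℕ)
    (h1 : 2 ^ (k + 1) < m) (h2 : m ≤ 2 ^ (k + 2)) :
    m ∈ blockSet s ↔ 2 ^ (k + 1) + ⌊s * (2 : ℝ) ^ k⌋₊ < m ∧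
      m ≤ 2 ^ (k + 1) + ⌊s * (2 : ℝ) ^ k⌋₊ + 2 ^ k := by
  constructor
  · rintro ⟨n, hn, t, ht1, ht2, rfl⟩
    obtain ⟨j, rfl⟩ : ∃ j, n = j + 1 := ⟨n - 1, by omega⟩
    simp only [Nat.add_sub_cancel] at *
    have hf := bs_floor_le hs j
    have hjk : j = k := by
      rcases lt_trichotomy j k with h | h | h
      · have : 2 ^ (j + 2) ≤ 2 ^ (k + 1) := Nat.pow_le_pow_right (by norm_num) (by omega)
        have e1 : 2 ^ (j + 2) = 4 * 2 ^ j := by ring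
        have e2 : 2 ^ (j + 1) = 2 * 2 ^ j := by ring
        omega
      · exact h
      · have : 2 ^ (k + 2) ≤ 2 ^ (j + 1) := Nat.pow_le_pow_right (by norm_num) (by omega)
        omega
    subst hjk
    omega
  · rintro ⟨h3, h4⟩
    refine ⟨k + 1, by omega, m - (2 ^ (k + 1) + ⌊s * (2 : ℝ) ^ k⌋₊), by omega, ?_, ?_⟩
    · simp only [Nat.add_sub_cancel]; omega
    · simp only [Nat.add_sub_cancel]; omega

theorem bs_gt_two {s : ℝ} {m : ℕ} (h : m ∈ blockSet s) : 2 < m := by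
  obtain ⟨n, hn, t, ht1, ht2, rfl⟩ := h
  have : 2 ^ 1 ≤ 2 ^ n := Nat.pow_le_pow_right (by norm_num) hn
  omega

theorem bs_step {s : ℝ} (hs : s ∈ Set.Icc (0 : ℝ) 1) (k N : ℕ)
    (h1 : 2 ^ (k + 1) ≤ N) (h2 : N ≤ 2 ^ (k + 2)) :
    (blockSet s ∩ Set.Icc 1 N).ncard = (blockSet s ∩ Set.Icc 1 (2 ^ (k + 1))).ncard +
      (min N (2 ^ (k + 1) + ⌊s * (2 : ℝ) ^ k⌋₊ + 2 ^ k)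
        - (2 ^ (k + 1) + ⌊s * (2 : ℝ) ^ k⌋₊)) := by
  have hu : blockSet s ∩ Set.Icc 1 N = (blockSet s ∩ Set.Icc 1 (2 ^ (k + 1))) ∪
      (Finset.Ioc (2 ^ (k + 1) + ⌊s * (2 : ℝ) ^ k⌋₊)
        (min N (2 ^ (k + 1) + ⌊s * (2 : ℝ) ^ k⌋₊ + 2 ^ k)) : Finset ℕ) := by
    ext m
    simp only [Set.mem_inter_iff, Set.mem_Icc, Set.mem_union, Finset.coe_Ioc, Set.mem_Ioc, le_min_iff]
    by_cases hm : m ≤ 2 ^ (k + 1)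
    · constructor
      · rintro ⟨a, b, c⟩; exact Or.inl ⟨a, b, hm⟩
      · rintro (⟨a, b, c⟩ | ⟨a, b, c⟩)
        · exact ⟨a, b, by omega⟩
        · omega
    · constructor
      · rintro ⟨a, b, c⟩
        have := (bs_mem_iff hs k m (by omega) (by omega)).1 a
        exact Or.inr ⟨this.1, c, this.2⟩
      · rintro (⟨a, b, c⟩ | ⟨a, b, c⟩)
        · omega
        · exact ⟨(bs_mem_iff hs k m (by omega) (by omega)).2 ⟨a, c⟩, by omega, b⟩
  rw [hu, Set.ncard_union_eq, Set.ncard_coe_finset, Nat.card_Ioc]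
  · rw [Set.disjoint_left]
    rintro m ⟨_, _, hm⟩ hm2
    simp only [Finset.coe_Ioc, Set.mem_Ioc] at hm2
    omega

theorem bs_pow {s : ℝ} (hs : s ∈ Set.Icc (0 : ℝ) 1) (k : ℕ) :
    (blockSet s ∩ Set.Icc 1 (2 ^ (k + 1))).ncard + 1 = 2 ^ k := by
  induction k with
  | zero =>
    have : blockSet s ∩ Set.Icc 1 (2 ^ (0 + 1)) = ∅ := by
      ext m
      simp only [Set.mem_inter_iff, Set.mem_Icc, Set.mem_empty_iff_false, iff_false]
      rintro ⟨a, b, c⟩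
      have := bs_gt_two a
      omega
    rw [this]; simp
  | succ k ih =>
    have e1 : 2 ^ (k + 2) = 4 * 2 ^ k := by ring
    have e2 : 2 ^ (k + 1) = 2 * 2 ^ k := by ring
    have hf := bs_floor_le hs k
    have := bs_step hs k (2 ^ (k + 2)) (by omega) le_rfl
    rw [show k + 1 + 1 = k + 2 from rfl, this]
    omega

theorem bs_upper {s : ℝ} (hs : s ∈ Set.Icc (0 : ℝ) 1) (N : ℕ) :
    ((blockSet s ∩ Set.Icc 1 N).ncard : ℝ) * (3 + s) ≤ 2 * N := by
  rcases lt_or_ge N 2 with hN | hN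
  · have : blockSet s ∩ Set.Icc 1 N = ∅ := by
      ext m
      simp only [Set.mem_inter_iff, Set.mem_Icc, Set.mem_empty_iff_false, iff_false]
      rintro ⟨a, b, c⟩
      have := bs_gt_two a
      omega
    rw [this]; simp
  obtain ⟨k, h1, h2⟩ : ∃ k, 2 ^ (k + 1) ≤ N ∧ N ≤ 2 ^ (k + 2) := by
    have h0 : Nat.log 2 N ≠ 0 := by
      have := Nat.log_pos (b := 2) (by norm_num) hN
      omega
    refine ⟨Nat.log 2 N - 1, ?_, ?_⟩
    · rw [show Nat.log 2 N - 1 + 1 = Nat.log 2 N by omega]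
      exact Nat.pow_log_le_self 2 (by omega)
    · rw [show Nat.log 2 N - 1 + 2 = Nat.log 2 N + 1 by omega]
      exact (Nat.lt_pow_succ_log_self (by norm_num) N).le
  have hc := bs_step hs k N h1 h2
  have hp := bs_pow hs k
  have hlt := Nat.lt_floor_add_one (s * (2 : ℝ) ^ k)
  have hle := Nat.floor_le (a := s * (2 : ℝ) ^ k) (by have := hs.1; positivity)
  have e2 : 2 ^ (k + 1) = 2 * 2 ^ k := by ring
  generalize ⌊s * (2 : ℝ) ^ k⌋₊ = f at *
  generalize (blockSet s ∩ Set.Icc 1 N).ncard = c at *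
  generalize (blockSet s ∩ Set.Icc 1 (2 ^ (k + 1))).ncard = d at *
  have hK : ((2 ^ k : ℕ) : ℝ) = 2 ^ k := by push_cast; rfl
  rw [← hK] at hlt hle
  rw [e2] at hc h1
  clear h2 e2 hK
  generalize 2 ^ k = K at *
  have hs0 := hs.1
  have hs1 := hs.2
  rcases le_or_gt N (2 * K + f) with h | h
  · have hcK : c + 1 = K := by omega
    have hcR : (c : ℝ) + 1 = K := by exact_mod_cast hcK
    have h1R : 2 * (K : ℝ) ≤ N := by exact_mod_cast h1
    have : (0 : ℝ) ≤ c := by positivity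
    nlinarith
  · obtain ⟨r, hr, hrK⟩ : ∃ r, c + 1 + r = 2 * K ∧ 3 * K + f ≤ N + r := by
      refine ⟨2 * K - (c + 1), by omega, by omega⟩
    have hcR : (c : ℝ) + 1 + r = 2 * K := by exact_mod_cast hr
    have hNR : 3 * (K : ℝ) + f ≤ N + r := by exact_mod_cast hrK
    have hr0 : (0 : ℝ) ≤ r := by positivity
    have : (c : ℝ) = 2 * K - 1 - r := by linarith
    rw [this]
    nlinarith [mul_nonneg hr0 hs0]

theorem bs_end {s : ℝ} (hs : s ∈ Set.Icc (0 : ℝ) 1) (k : ℕ) :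
    (blockSet s ∩ Set.Icc 1 (2 ^ (k + 1) + ⌊s * (2 : ℝ) ^ k⌋₊ + 2 ^ k)).ncard + 1
      = 2 * 2 ^ k := by
  have e1 : 2 ^ (k + 2) = 4 * 2 ^ k := by ring
  have e2 : 2 ^ (k + 1) = 2 * 2 ^ k := by ring
  have hf := bs_floor_le hs k
  have hp := bs_pow hs k
  have := bs_step hs k (2 ^ (k + 1) + ⌊s * (2 : ℝ) ^ k⌋₊ + 2 ^ k) (by omega) (by omega)
  rw [this]
  omega

/-- For every `s ∈ [0,1]`, the upper asymptotic density of `A_s` equals `2/(3+s)`. -/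
theorem blockSet_upper_density :
    ∀ s ∈ Set.Icc (0 : ℝ) 1,
      limsup (fun n : ℕ => (1 / (n : ℝ)) * Nat.card (blockSet s ∩ Set.Icc 1 n : Set ℕ)) atTop
        = 2 / (3 + s) := by
  intro s hs
  have hs0 := hs.1
  have hs1 := hs.2
  have h3 : (0 : ℝ) < 3 + s := by linarith
  simp only [Nat.card_coe_set_eq]
  have hub : ∀ n : ℕ, (1 / (n : ℝ)) * ((blockSet s ∩ Set.Icc 1 n).ncard : ℝ) ≤ 2 / (3 + s) := by
    intro n
    rcases Nat.eq_zero_or_pos n with rfl | hn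
    · simp; positivity
    · have hn' : (0 : ℝ) < n := by exact_mod_cast hn
      rw [one_div_mul_eq_div, div_le_div_iff₀ hn' h3]
      exact bs_upper hs n
  have hlb : ∀ n : ℕ, 0 ≤ (1 / (n : ℝ)) * ((blockSet s ∩ Set.Icc 1 n).ncard : ℝ) := by
    intro n; positivity
  have hB : IsBoundedUnder (· ≤ ·) atTop
      (fun n : ℕ => (1 / (n : ℝ)) * ((blockSet s ∩ Set.Icc 1 n).ncard : ℝ)) :=
    isBoundedUnder_of ⟨_, hub⟩
  have hB' : IsBoundedUnder (· ≥ ·) atTop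
      (fun n : ℕ => (1 / (n : ℝ)) * ((blockSet s ∩ Set.Icc 1 n).ncard : ℝ)) :=
    isBoundedUnder_of ⟨_, hlb⟩
  apply le_antisymm
  · exact limsup_le_of_le hB'.isCoboundedUnder_le (Eventually.of_forall hub)
  · apply le_of_forall_lt
    intro b hb
    obtain ⟨b', hb1, hb2⟩ := exists_between hb
    refine lt_of_lt_of_le hb1 (le_limsup_of_frequently_le ?_ hB)
    have hE : Tendsto (fun k : ℕ => 2 ^ (k + 1) + ⌊s * (2 : ℝ) ^ k⌋₊ + 2 ^ k) atTop atTop := by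
      refine tendsto_atTop_mono (fun k => ?_) tendsto_id
      have := (Nat.lt_two_pow_self (n := k)).le
      simp only [id]
      omega
    refine hE.frequently (Eventually.frequently ?_)
    have hT : Tendsto (fun k : ℕ => 2 / (3 + s) - (1 / 2 : ℝ) ^ k) atTop (nhds (2 / (3 + s) - 0)) :=
      tendsto_const_nhds.sub (tendsto_pow_atTop_nhds_zero_of_lt_one (by norm_num) (by norm_num))
    rw [sub_zero] at hT
    filter_upwards [hT.eventually (lt_mem_nhds hb2)] with k hk
    refine hk.le.trans ?_
    have he := bs_end hs k
    have heR : ((blockSet s ∩ Set.Icc 1 (2 ^ (k + 1) + ⌊s * (2 : ℝ) ^ k⌋₊ + 2 ^ k)).ncard : ℝ)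
        = 2 * 2 ^ k - 1 := by
      rw [eq_sub_iff_add_eq]
      exact_mod_cast he
    rw [heR, one_div_mul_eq_div]
    have hle := Nat.floor_le (a := s * (2 : ℝ) ^ k) (by positivity)
    have hK : (1 : ℝ) ≤ 2 ^ k := one_le_pow₀ (by norm_num)
    push_cast
    rw [one_div, inv_pow, pow_succ]
    generalize (2 : ℝ) ^ k = K at *
    have hK0 : 0 < K := by linarith
    calc 2 / (3 + s) - K⁻¹ ≤ (2 * K - 1) / ((3 + s) * K) := by
          have : 2 / (3 + s) - K⁻¹ = (2 * K - (3 + s)) / ((3 + s) * K) := by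
            field_simp
          rw [this]
          gcongr
          linarith
      _ ≤ _ := by
          apply div_le_div_of_nonneg_left (by linarith) (by positivity)
          linarith
end

section
/- For s ∈ [0,1], define A_s := ⋃_{n≥1} { 2^n + ⌊s·2^{n−1}⌋ + t : t = 1, …, 2^{n−1} } ⊆ ℕ. Then for every s ∈ [0,1], A_s does not have an asymptotic density; indeed, liminf_{n→∞} (1/n) · #(A_s ∩ [1, n]) = 1/(2+s) < 2/(3+s) = limsup_{n→∞} (1/n) · #(A_s ∩ [1, n]). -/
open Filter

lemma blk_floor (s : ℝ) (hs : s ∈ Set.Icc (0 : ℝ) 1) (k : ℕ) :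
    ((⌊s * (2 : ℝ) ^ k⌋₊ : ℕ) : ℝ) ≤ s * 2 ^ k ∧ s * 2 ^ k < (⌊s * (2 : ℝ) ^ k⌋₊ : ℕ) + 1 ∧
      ⌊s * (2 : ℝ) ^ k⌋₊ ≤ 2 ^ k := by
  have h1 : ((⌊s * (2 : ℝ) ^ k⌋₊ : ℕ) : ℝ) ≤ s * 2 ^ k :=
    Nat.floor_le (mul_nonneg hs.1 (by positivity))
  refine ⟨h1, Nat.lt_floor_add_one _, ?_⟩
  have h2 : s * (2 : ℝ) ^ k ≤ 1 * 2 ^ k := mul_le_mul_of_nonneg_right hs.2 (by positivity)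
  have : ((⌊s * (2 : ℝ) ^ k⌋₊ : ℕ) : ℝ) ≤ ((2 ^ k : ℕ) : ℝ) := by push_cast; linarith
  exact_mod_cast this

lemma blk_mem (s : ℝ) (hs : s ∈ Set.Icc (0 : ℝ) 1) (k m : ℕ) (h1 : 2 ^ (k + 1) < m)
    (h2 : m ≤ 2 ^ (k + 2)) :
    m ∈ blockSet s ↔ 2 ^ (k + 1) + ⌊s * (2 : ℝ) ^ k⌋₊ < m ∧
      m ≤ 2 ^ (k + 1) + ⌊s * (2 : ℝ) ^ k⌋₊ + 2 ^ k := by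
  constructor
  · rintro ⟨n, hn, t, ht1, ht2, hm⟩
    obtain ⟨l, rfl⟩ : ∃ l, n = l + 1 := ⟨n - 1, by omega⟩
    simp only [Nat.add_sub_cancel] at ht2 hm
    have hf := (blk_floor s hs l).2.2
    have e1 : 2 ^ (l + 1) = 2 * 2 ^ l := by ring
    have hlk : l = k := by
      rcases lt_trichotomy l k with h | h | h
      · have : 2 ^ (l + 2) ≤ 2 ^ (k + 1) := Nat.pow_le_pow_right (by norm_num) (by omega)
        have e2 : 2 ^ (l + 2) = 4 * 2 ^ l := by ring
        omega
      · exact h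
      · have : 2 ^ (k + 2) ≤ 2 ^ (l + 1) := Nat.pow_le_pow_right (by norm_num) (by omega)
        omega
    subst hlk
    omega
  · rintro ⟨h3, h4⟩
    refine ⟨k + 1, by omega, m - (2 ^ (k + 1) + ⌊s * (2 : ℝ) ^ k⌋₊), by omega, ?_, ?_⟩
    · simp only [Nat.add_sub_cancel]; omega
    · simp only [Nat.add_sub_cancel]; omega

lemma blk_lt (s : ℝ) (m : ℕ) (h : m ∈ blockSet s) : 2 < m := by
  obtain ⟨n, hn, t, ht1, ht2, hm⟩ := h
  have : 2 ^ 1 ≤ 2 ^ n := Nat.pow_le_pow_right (by norm_num) hn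
  omega

open Classical in
lemma blk_card (s : ℝ) (N : ℕ) :
    Nat.card (blockSet s ∩ Set.Icc 1 N : Set ℕ) = Nat.count (· ∈ blockSet s) (N + 1) := by
  rw [Nat.count_eq_card_filter_range, Nat.card_coe_set_eq, ← Set.ncard_coe_finset]
  congr 1
  ext m
  simp only [Set.mem_inter_iff, Set.mem_Icc, Finset.coe_filter, Finset.mem_range, Set.mem_ofPred_eq]
  constructor
  · rintro ⟨h, _, _⟩; exact ⟨by omega, h⟩
  · rintro ⟨h, h'⟩
    have := blk_lt s m h'
    exact ⟨h', by omega, by omega⟩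

lemma blk_step (s : ℝ) (N : ℕ) (x : Prop) [Decidable x] (h : N + 1 ∈ blockSet s ↔ x) :
    Nat.card (blockSet s ∩ Set.Icc 1 (N + 1) : Set ℕ) =
      Nat.card (blockSet s ∩ Set.Icc 1 N : Set ℕ) + if x then 1 else 0 := by
  classical
  rw [blk_card, blk_card, Nat.count_succ]
  simp [h]

lemma blk_two (s : ℝ) : Nat.card (blockSet s ∩ Set.Icc 1 2 : Set ℕ) = 0 := by
  have : (blockSet s ∩ Set.Icc 1 2 : Set ℕ) = ∅ := by
    ext m
    simp only [Set.mem_inter_iff, Set.mem_Icc, Set.mem_empty_iff_false, iff_false]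
    rintro ⟨h, _, h2⟩
    have := blk_lt s m h
    omega
  rw [this]; simp

lemma blk_aux (s : ℝ) (hs : s ∈ Set.Icc (0 : ℝ) 1) (k : ℕ)
    (h0 : Nat.card (blockSet s ∩ Set.Icc 1 (2 ^ (k + 1)) : Set ℕ) = 2 ^ k - 1) (j : ℕ)
    (hj : j ≤ 2 ^ (k + 1)) :
    Nat.card (blockSet s ∩ Set.Icc 1 (2 ^ (k + 1) + j) : Set ℕ) =
      2 ^ k - 1 + min (j - ⌊s * (2 : ℝ) ^ k⌋₊) (2 ^ k) := by
  induction j with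
  | zero => simpa using h0
  | succ j ih =>
    have e2 : 2 ^ (k + 2) = 2 * 2 ^ (k + 1) := by ring
    rw [← add_assoc, blk_step s _ _ (blk_mem s hs k (2 ^ (k + 1) + j + 1) (by omega) (by omega)),
      ih (by omega)]
    split_ifs <;> omega

lemma blk_count (s : ℝ) (hs : s ∈ Set.Icc (0 : ℝ) 1) (k : ℕ) : ∀ j : ℕ, j ≤ 2 ^ (k + 1) →
    Nat.card (blockSet s ∩ Set.Icc 1 (2 ^ (k + 1) + j) : Set ℕ) =
      2 ^ k - 1 + min (j - ⌊s * (2 : ℝ) ^ k⌋₊) (2 ^ k) := by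
  induction k with
  | zero => exact blk_aux s hs 0 (by simpa using blk_two s)
  | succ k ih =>
    refine blk_aux s hs (k + 1) ?_
    have := ih (2 ^ (k + 1)) le_rfl
    have e2 : 2 ^ (k + 1 + 1) = 2 ^ (k + 1) + 2 ^ (k + 1) := by ring
    have e1 : 2 ^ (k + 1) = 2 * 2 ^ k := by ring
    have hf := (blk_floor s hs k).2.2
    have hp : 0 < 2 ^ k := by positivity
    rw [e2, this]
    omega

lemma blk_bounds (s : ℝ) (hs : s ∈ Set.Icc (0 : ℝ) 1) (N : ℕ) (hN : 2 ≤ N) :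
    (N : ℝ) ≤ (2 + s) * ((Nat.card (blockSet s ∩ Set.Icc 1 N : Set ℕ) : ℝ) + 1) ∧
    (3 + s) * (Nat.card (blockSet s ∩ Set.Icc 1 N : Set ℕ) : ℝ) ≤ 2 * N := by
  obtain ⟨k, j, hj, rfl⟩ : ∃ k j, j ≤ 2 ^ (k + 1) ∧ N = 2 ^ (k + 1) + j := by
    have h1 : 1 ≤ Nat.log 2 N := Nat.log_pos (by norm_num) hN
    have h2 := Nat.pow_log_le_self 2 (x := N) (by omega)
    have h3 := Nat.lt_pow_succ_log_self (b := 2) (by norm_num) N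
    refine ⟨Nat.log 2 N - 1, N - 2 ^ (Nat.log 2 N), ?_, ?_⟩
    · rw [Nat.sub_add_cancel h1]
      rw [Nat.pow_succ] at h3
      omega
    · rw [Nat.sub_add_cancel h1]; omega
  rw [blk_count s hs k j hj]
  obtain ⟨hf1, hf2, hf3⟩ := blk_floor s hs k
  generalize ⌊s * (2 : ℝ) ^ k⌋₊ = f at *
  have hp : 1 ≤ 2 ^ k := Nat.one_le_two_pow
  have hp' : (1 : ℝ) ≤ 2 ^ k := by exact_mod_cast hp
  obtain ⟨h0, h1⟩ := hs
  have hj' : (j : ℝ) ≤ 2 * 2 ^ k := by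
    have : j ≤ 2 * 2 ^ k := by rw [pow_succ] at hj; omega
    exact_mod_cast this
  have hf0 : (0 : ℝ) ≤ f := Nat.cast_nonneg _
  push_cast [Nat.cast_sub hp]
  rcases le_total j f with h | h
  · rw [Nat.sub_eq_zero_of_le h]
    have h' : (j : ℝ) ≤ f := by exact_mod_cast h
    have hj0 : (0 : ℝ) ≤ j := Nat.cast_nonneg _
    have : min (0 : ℝ) (2 ^ k) = 0 := min_eq_left (by positivity)
    simp only [Nat.cast_zero, this, pow_succ]
    constructor <;> nlinarith
  · obtain ⟨i, rfl⟩ := Nat.exists_eq_add_of_le h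
    rw [Nat.add_sub_cancel_left]
    have hi0 : (0 : ℝ) ≤ i := Nat.cast_nonneg _
    push_cast at *
    rcases le_total (i : ℝ) (2 ^ k) with h2 | h2
    · simp only [min_eq_left h2, pow_succ]
      constructor <;> nlinarith
    · simp only [min_eq_right h2, pow_succ]
      constructor <;> nlinarith

lemma blk_freq1 (s : ℝ) (hs : s ∈ Set.Icc (0 : ℝ) 1) (M : ℕ) : ∃ N ≥ M, 2 ≤ N ∧
    (2 + s) * (Nat.card (blockSet s ∩ Set.Icc 1 N : Set ℕ) : ℝ) ≤ N := by
  have hM := @Nat.lt_two_pow_self M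
  obtain ⟨hf1, hf2, hf3⟩ := blk_floor s hs M
  have hp : 1 ≤ 2 ^ M := Nat.one_le_two_pow
  have e : 2 ^ (M + 1) = 2 * 2 ^ M := by ring
  refine ⟨2 ^ (M + 1) + ⌊s * (2 : ℝ) ^ M⌋₊, by omega, by omega, ?_⟩
  rw [blk_count s hs M _ (by omega)]
  obtain ⟨h0, h1⟩ := hs
  simp only [Nat.sub_self, Nat.zero_min]
  push_cast [Nat.cast_sub hp]
  rw [pow_succ]
  nlinarith

lemma blk_freq2 (s : ℝ) (hs : s ∈ Set.Icc (0 : ℝ) 1) (M : ℕ) : ∃ N ≥ M, 2 ≤ N ∧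
    2 * (N : ℝ) ≤ (3 + s) * ((Nat.card (blockSet s ∩ Set.Icc 1 N : Set ℕ) : ℝ) + 1) := by
  have hM := @Nat.lt_two_pow_self M
  obtain ⟨hf1, hf2, hf3⟩ := blk_floor s hs M
  have hp : 1 ≤ 2 ^ M := Nat.one_le_two_pow
  have e : 2 ^ (M + 1) = 2 * 2 ^ M := by ring
  refine ⟨2 ^ (M + 1) + (⌊s * (2 : ℝ) ^ M⌋₊ + 2 ^ M), by omega, by omega, ?_⟩
  rw [blk_count s hs M _ (by omega)]
  obtain ⟨h0, h1⟩ := hs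
  simp only [Nat.add_sub_cancel_left, min_self]
  push_cast [Nat.cast_sub hp]
  rw [pow_succ]
  nlinarith

/-- For every `s ∈ [0,1]`, `A_s` has no asymptotic density: its lower density `1/(2+s)` is
strictly smaller than its upper density `2/(3+s)`. -/
theorem blockSet_no_density :
    ∀ s ∈ Set.Icc (0 : ℝ) 1,
      liminf (fun n : ℕ => (1 / (n : ℝ)) * Nat.card (blockSet s ∩ Set.Icc 1 n : Set ℕ)) atTop
          = 1 / (2 + s) ∧
        (1 : ℝ) / (2 + s) < 2 / (3 + s) ∧
        limsup (fun n : ℕ => (1 / (n : ℝ)) * Nat.card (blockSet s ∩ Set.Icc 1 n : Set ℕ)) atTop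
          = 2 / (3 + s) := by
  intro s hs
  have hs' := hs
  obtain ⟨h0, h1⟩ := hs
  set u : ℕ → ℝ := fun n : ℕ => (1 / (n : ℝ)) * Nat.card (blockSet s ∩ Set.Icc 1 n : Set ℕ)
    with hu
  have hp2 : 0 < 2 + s := by linarith
  have hp3 : 0 < 3 + s := by linarith
  have hlo : ∀ n : ℕ, 2 ≤ n → 1 / (2 + s) - 1 / (n : ℝ) ≤ u n := by
    intro n hn
    have hn' : (0 : ℝ) < n := by exact_mod_cast (by omega : 0 < n)
    have := (blk_bounds s hs' n hn).1
    simp only [hu]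
    rw [sub_le_iff_le_add, div_le_iff₀ hp2]
    rw [← mul_add_one, one_div, mul_assoc, inv_mul_eq_div, le_div_iff₀ hn']
    linarith
  have hhi : ∀ n : ℕ, 2 ≤ n → u n ≤ 2 / (3 + s) := by
    intro n hn
    have hn' : (0 : ℝ) < n := by exact_mod_cast (by omega : 0 < n)
    have := (blk_bounds s hs' n hn).2
    simp only [hu]
    rw [one_div, inv_mul_eq_div, div_le_div_iff₀ hn' hp3]
    linarith
  have hnn : ∀ n : ℕ, 0 ≤ u n := fun n => by simp only [hu]; positivity
  have hbb : IsBoundedUnder (· ≥ ·) atTop u := isBoundedUnder_of ⟨0, hnn⟩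
  have hba : IsBoundedUnder (· ≤ ·) atTop u :=
    isBoundedUnder_of_eventually_le (a := 2 / (3 + s))
      ((eventually_ge_atTop 2).mono fun n hn => hhi n hn)
  have hlim : ∀ a b : ℝ, b < a → ∀ᶠ n : ℕ in atTop, b < a - 1 / (n : ℝ) := by
    intro a b hab
    have : Tendsto (fun n : ℕ => a - 1 / (n : ℝ)) atTop (nhds (a - 0)) :=
      tendsto_const_nhds.sub tendsto_one_div_atTop_nhds_zero_nat
    rw [sub_zero] at this
    exact this.eventually_const_lt hab
  refine ⟨le_antisymm ?_ ?_, ?_, le_antisymm ?_ ?_⟩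
  · refine liminf_le_of_frequently_le ?_ hbb
    rw [frequently_atTop]
    intro M
    obtain ⟨N, hN, hN2, h⟩ := blk_freq1 s hs' M
    refine ⟨N, hN, ?_⟩
    have hn' : (0 : ℝ) < N := by exact_mod_cast (by omega : 0 < N)
    simp only [hu]
    rw [one_div, inv_mul_eq_div, div_le_div_iff₀ hn' hp2]
    linarith
  · refine le_of_forall_lt fun b hb => ?_
    obtain ⟨c, hbc, hc⟩ := exists_between hb
    refine hbc.trans_le (le_liminf_of_le hba.isCoboundedUnder_ge ?_)
    filter_upwards [hlim _ _ hc, eventually_ge_atTop 2] with n hn hn2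
    exact hn.le.trans (hlo n hn2)
  · rw [div_lt_div_iff₀ hp2 hp3]; linarith
  · exact limsup_le_of_le hbb.isCoboundedUnder_le
      ((eventually_ge_atTop 2).mono fun n hn => hhi n hn)
  · refine le_of_forall_lt fun b hb => ?_
    obtain ⟨c, hbc, hc⟩ := exists_between hb
    refine hbc.trans_le (le_limsup_of_frequently_le ?_ hba)
    rw [frequently_atTop]
    intro M
    obtain ⟨M', hM'⟩ := eventually_atTop.1 (hlim _ _ hc)
    obtain ⟨N, hN, hN2, h⟩ := blk_freq2 s hs' (max M M')
    refine ⟨N, (le_max_left _ _).trans hN, ?_⟩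
    refine (hM' N ((le_max_right _ _).trans hN)).le.trans ?_
    have hn' : (0 : ℝ) < N := by exact_mod_cast (by omega : 0 < N)
    simp only [hu]
    rw [sub_le_iff_le_add, div_le_iff₀ hp3]
    rw [← mul_add_one, one_div, mul_assoc, inv_mul_eq_div, le_div_iff₀ hn']
    linarith
end

section
/- Let (x_n)_{n≥1} be a real sequence that is Cesàro convergent to 0, let α > 1, and for k ≥ 1 set ι_k := ⌈α^{k−1}⌉ and b_k := (1/#I_{α,k}) Σ_{i ∈ I_{α,k}} x_i, where I_{α,k} := [α^{k−1}, α^k) ∩ ℕ (with b_k := 0 when I_{α,k} is empty). Then for all sufficiently large k, (ι_{k+1} − ι_k)·b_k = (ι_{k+1} − 1)·a_{ι_{k+1}−1} − (ι_k − 1)·a_{ι_k−1}, where a_n := (1/n) Σ_{i=1}^{n} x_i, and consequently lim_{k→∞} b_k = 0. -/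
open Filter

/-- If `x` is Cesàro convergent to `0` and `α > 1`, then with `ι k = ⌈α^(k-1)⌉`,
`a n = (1/n) ∑_{i=1}^n x i` and `b k` the average of `x` over `I_{α,k} = [α^(k-1), α^k) ∩ ℕ`
(set to `0` when the block is empty), we have, for all sufficiently large `k`,
`(ι (k+1) - ι k) · b k = (ι (k+1) - 1) · a (ι (k+1) - 1) - (ι k - 1) · a (ι k - 1)`,
and consequently `b k → 0`. -/
theorem block_avg_identity_and_tendsto_zero (x : ℕ → ℝ) (α : ℝ) (hα : 1 < α)
    (a b : ℕ → ℝ) (ι : ℕ → ℕ)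
    (ha : ∀ n : ℕ, a n = (1 / (n : ℝ)) * ∑ i ∈ Finset.Icc 1 n, x i)
    (hι : ∀ k : ℕ, ι k = ⌈α ^ (k - 1)⌉₊)
    (hb : ∀ k : ℕ, b k =
      (1 / ((Finset.Ico ⌈α ^ (k - 1)⌉₊ ⌈α ^ k⌉₊).card : ℝ)) *
        ∑ i ∈ Finset.Ico ⌈α ^ (k - 1)⌉₊ ⌈α ^ k⌉₊, x i)
    (hcesaro : Tendsto a atTop (nhds 0)) :
    (∃ K : ℕ, ∀ k : ℕ, K ≤ k →
        ((ι (k + 1) : ℝ) - (ι k : ℝ)) * b k =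
          ((ι (k + 1) : ℝ) - 1) * a (ι (k + 1) - 1) - ((ι k : ℝ) - 1) * a (ι k - 1)) ∧
      Tendsto b atTop (nhds 0) := by
  have hpos : ∀ k : ℕ, 1 ≤ ⌈α ^ k⌉₊ := fun k => Nat.one_le_ceil_iff.mpr (by positivity)
  have hS : ∀ m : ℕ, 1 ≤ m → ((m : ℝ) - 1) * a (m - 1) = ∑ i ∈ Finset.Ico 1 m, x i := by
    intro m hm
    obtain ⟨n, rfl⟩ : ∃ n, m = n + 1 := ⟨m - 1, by omega⟩
    have hI : Finset.Ico 1 (n + 1) = Finset.Icc 1 n := by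
      ext i
      simp only [Finset.mem_Ico, Finset.mem_Icc]
      omega
    rw [hI, Nat.add_sub_cancel, ha n]
    rcases Nat.eq_zero_or_pos n with h | h
    · subst h
      simp
    · have : (n : ℝ) ≠ 0 := by positivity
      push_cast
      field_simp
      ring
  have hmono : ∀ k : ℕ, ⌈α ^ k⌉₊ ≤ ⌈α ^ (k + 1)⌉₊ := fun k =>
    Nat.ceil_mono (pow_le_pow_right₀ hα.le (Nat.le_succ k))
  have key : ∀ k : ℕ, ((⌈α ^ (k + 1)⌉₊ : ℝ) - (⌈α ^ k⌉₊ : ℝ)) * b (k + 1) =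
      ((⌈α ^ (k + 1)⌉₊ : ℝ) - 1) * a (⌈α ^ (k + 1)⌉₊ - 1)
        - ((⌈α ^ k⌉₊ : ℝ) - 1) * a (⌈α ^ k⌉₊ - 1) := by
    intro k
    rw [hS _ (hpos _), hS _ (hpos _), hb (k + 1), Nat.add_sub_cancel,
      ← Finset.sum_Ico_consecutive x (hpos k) (hmono k), Nat.card_Ico, Nat.cast_sub (hmono k)]
    rcases (hmono k).eq_or_lt with h | h
    · rw [← h]
      simp
    · have h2 : (⌈α ^ k⌉₊ : ℝ) < (⌈α ^ (k + 1)⌉₊ : ℝ) := by exact_mod_cast h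
      have h3 : (⌈α ^ (k + 1)⌉₊ : ℝ) - (⌈α ^ k⌉₊ : ℝ) ≠ 0 := by linarith
      field_simp
      ring
  refine ⟨⟨1, fun k hk => ?_⟩, ?_⟩
  · obtain ⟨n, rfl⟩ : ∃ n, k = n + 1 := ⟨k - 1, by omega⟩
    rw [hι, hι, Nat.add_sub_cancel, Nat.add_sub_cancel]
    exact key n
  · rw [← tendsto_add_atTop_iff_nat 1]
    have hpow : Tendsto (fun k : ℕ => α ^ k) atTop atTop := tendsto_pow_atTop_atTop_of_one_lt hα
    have hm : Tendsto (fun k : ℕ => ⌈α ^ k⌉₊ - 1) atTop atTop :=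
      (tendsto_sub_atTop_nat 1).comp (tendsto_nat_ceil_atTop.comp hpow)
    have hA : Tendsto (fun k : ℕ => |a (⌈α ^ k⌉₊ - 1)|) atTop (nhds 0) := by
      simpa using (hcesaro.comp hm).abs
    have hA' : Tendsto (fun k : ℕ => |a (⌈α ^ (k + 1)⌉₊ - 1)|) atTop (nhds 0) :=
      hA.comp (tendsto_add_atTop_nat 1)
    have hB : Tendsto (fun k : ℕ => 2 / (α - 1) *
        (α * |a (⌈α ^ (k + 1)⌉₊ - 1)| + |a (⌈α ^ k⌉₊ - 1)|)) atTop (nhds 0) := by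
      simpa using ((hA'.const_mul α).add hA).const_mul (2 / (α - 1))
    refine squeeze_zero_norm' ?_ hB
    filter_upwards [hpow.eventually_ge_atTop (2 / (α - 1))] with k hk
    have hα1 : 0 < α - 1 := by linarith
    rw [div_le_iff₀ hα1] at hk
    have hp : 0 < α ^ k := by positivity
    have k1 := key k
    have c1 : (1 : ℝ) ≤ ⌈α ^ k⌉₊ := by exact_mod_cast hpos k
    have c1' : (1 : ℝ) ≤ ⌈α ^ (k + 1)⌉₊ := by exact_mod_cast hpos (k + 1)
    have c2 := Nat.ceil_lt_add_one hp.le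
    have c3 := Nat.le_ceil (α ^ (k + 1))
    have c4 := Nat.ceil_lt_add_one (show 0 ≤ α ^ (k + 1) by positivity)
    have hs : α ^ (k + 1) = α * α ^ k := pow_succ' α k
    generalize (⌈α ^ k⌉₊ : ℝ) = u at *
    generalize (⌈α ^ (k + 1)⌉₊ : ℝ) = v at *
    generalize a (⌈α ^ k⌉₊ - 1) = y at *
    generalize a (⌈α ^ (k + 1)⌉₊ - 1) = z at *
    rw [hs] at c3 c4
    generalize α ^ k = p at *
    have hd : p * (α - 1) / 2 ≤ v - u := by linarith
    have hd0 : 0 < p * (α - 1) / 2 := by positivity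
    have e1 : (v - u) * |b (k + 1)| ≤ p * (α * |z| + |y|) := by
      calc (v - u) * |b (k + 1)| = |(v - 1) * z - (u - 1) * y| := by
            rw [← k1, abs_mul, abs_of_pos (by linarith : 0 < v - u)]
        _ ≤ |(v - 1) * z| + |(u - 1) * y| := abs_sub _ _
        _ = (v - 1) * |z| + (u - 1) * |y| := by
            rw [abs_mul, abs_mul, abs_of_nonneg (by linarith : 0 ≤ v - 1),
              abs_of_nonneg (by linarith : 0 ≤ u - 1)]
        _ ≤ (α * p) * |z| + p * |y| := by
            gcongr <;> linarith
        _ = _ := by ring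
    have e2 : p * (α - 1) / 2 * |b (k + 1)| ≤ p * (α * |z| + |y|) :=
      (mul_le_mul_of_nonneg_right hd (abs_nonneg _)).trans e1
    rw [Real.norm_eq_abs, div_mul_eq_mul_div, le_div_iff₀ hα1]
    refine le_of_mul_le_mul_left ?_ hp
    linarith
end
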